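/- Let (M, ω₁, N) be an ωN manifold of dimension 2n. Then each regular point of M has an open neighborhood admitting coordinates (λ₁, …, λ_n, μ₁, …, μ_n), where λ₁, …, λ_n are the eigenvalues of N, such that: (1) ω₁ = Σ_i dλ_i ∧ dμ_i (Darboux coordinates for ω₁), and (2) N* dλ_i = λ_i dλ_i and N* dμ_i = λ_i dμ_i for each i (Darboux–Nijenhuis coordinates). -/

import Mathlib

/-!
Every eigenvalue of `N` has multiplicity two, and the spectral projections `P i` split the
symplectic form as `ω = ∑ i, σ i` with `σ i = ω (P i ·, ·)` of rank two; more generally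
`ω (N ^ k ·, ·) = ∑ i, λ i ^ k • σ i`. The vanishing of the torsion gives `N* dλ i = λ i • dλ i` and
makes all the forms `ω (N ^ k ·, ·)` closed. By the former, `dλ i` vanishes on the kernel of `P i`,
so `dλ i ∧ σ i` is a 3-form on a plane and is zero; closedness then reads
`∑ i, λ i ^ k • dσ i = 0` for all `k`, a Vandermonde system, and every `σ i` is closed. A closed
2-form `σ i` with `dλ i ∧ σ i = 0` and `dλ i ≠ 0` is locally `dλ i ∧ dμ i`: this is the Poincaré
lemma along the level sets of `λ i`. As `N` acts by `λ i` on `σ i` and on `dλ i`, it does so on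
`dμ i`.
-/

open Module Set
noncomputable section

variable {E : Type*} [NormedAddCommGroup E] [NormedSpace ℝ E]

/-- The field of 2-forms `ω` is skew-symmetric at every point of `U`. -/
def IsSkewOn (ω : E → E →L[ℝ] E →L[ℝ] ℝ) (U : Set E) : Prop :=
  ∀ x ∈ U, ∀ v : E, ω x v v = 0

/-- The field of 2-forms `ω` is nondegenerate at every point of `U`. -/
def IsNondegOn (ω : E → E →L[ℝ] E →L[ℝ] ℝ) (U : Set E) : Prop :=
  ∀ x ∈ U, ∀ v : E, (∀ w : E, ω x v w = 0) → v = 0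

/-- The exterior derivative `dω` of the 2-form field `ω`, evaluated at `x` on
the vectors `u, v, w` (constant vector fields have vanishing brackets). -/
def extDeriv2 (ω : E → E →L[ℝ] E →L[ℝ] ℝ) (x u v w : E) : ℝ :=
  fderiv ℝ (fun y => ω y v w) x u - fderiv ℝ (fun y => ω y u w) x v
    + fderiv ℝ (fun y => ω y u v) x w

/-- The 2-form field `ω` is closed on `U`. -/
def IsClosed2On (ω : E → E →L[ℝ] E →L[ℝ] ℝ) (U : Set E) : Prop :=
  ∀ x ∈ U, ∀ u v w : E, extDeriv2 ω x u v w = 0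

/-- Lie bracket of two vector fields. -/
def lieVF (X Y : E → E) (x : E) : E := fderiv ℝ Y x (X x) - fderiv ℝ X x (Y x)

/-- `X` is a smooth section over `U` of the distribution `L`, i.e. `X ∈ Γ(L)`. -/
def TangentTo (L : E → Submodule ℝ E) (U : Set E) (X : E → E) : Prop :=
  ContDiffOn ℝ (⊤ : ℕ∞) X U ∧ ∀ x ∈ U, X x ∈ L x

/-- `(L_X (ω♭ Y)) x w = X[ω(Y, w)](x) − ω(Y, [X, w])(x)`: the right-hand side in the
characterization `ω(∇^B_X Y, Z) = X[ω(Y,Z)] − ω(Y,[X,Z])` of the Bott connection,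
with `Z` frozen to the constant vector field `w` (the expression is tensorial in `Z`). -/
def bottRHS (ω : E → E →L[ℝ] E →L[ℝ] ℝ) (X Y : E → E) (x w : E) : ℝ :=
  fderiv ℝ (fun y => ω y (Y y) w) x (X x) + ω x (Y x) (fderiv ℝ X x w)

/-- `B = ∇^B_X Y` is the Bott covariant derivative of `Y` along `X`:
`ω♭ B = L_X (ω♭ Y)`, i.e. `ω(B, Z) = X[ω(Y,Z)] − ω(Y,[X,Z])` for every `Z`;
equivalently `B = ω♯ L_X (ω♭ Y)`. -/
def IsBottDeriv (ω : E → E →L[ℝ] E →L[ℝ] ℝ) (U : Set E) (X Y B : E → E) : Prop :=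
  ∀ x ∈ U, ∀ w : E, ω x (B x) w = bottRHS ω X Y x w

/-- The covariant derivative `∇_X Y` of the linear connection with Christoffel map `Γ`. -/
def covDeriv (Γ : E → E →L[ℝ] E →L[ℝ] E) (X Y : E → E) (x : E) : E :=
  fderiv ℝ Y x (X x) + Γ x (X x) (Y x)

/-- The connection `Γ` is torsion-free on `U`
(`T(X,Y) = ∇_X Y − ∇_Y X − [X,Y] = 0`; tensorially, `Γ` is symmetric). -/
def IsTorsionFreeOn (Γ : E → E →L[ℝ] E →L[ℝ] E) (U : Set E) : Prop :=
  ∀ x ∈ U, ∀ u v : E, Γ x u v = Γ x v u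

/-- The connection `Γ` parallelizes `ω` on `U`:
`X[ω(Y,Z)] = ω(∇_X Y, Z) + ω(Y, ∇_X Z)` (tensorially, on constant fields). -/
def IsSymplecticConnOn (ω : E → E →L[ℝ] E →L[ℝ] ℝ)
    (Γ : E → E →L[ℝ] E →L[ℝ] E) (U : Set E) : Prop :=
  ∀ x ∈ U, ∀ u v w : E,
    fderiv ℝ (fun y => ω y v w) x u = ω x (Γ x u v) w + ω x v (Γ x u w)

/-- The connection `Γ` preserves the distribution `L` on `U`:
`∇_X Y ∈ Γ(L)` for every `X ∈ Γ(TM)` and `Y ∈ Γ(L)`. -/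
def PreservesOn (Γ : E → E →L[ℝ] E →L[ℝ] E) (L : E → Submodule ℝ E) (U : Set E) : Prop :=
  ∀ Y : E → E, ContDiffOn ℝ (⊤ : ℕ∞) Y U → (∀ x ∈ U, Y x ∈ L x) →
    ∀ x ∈ U, ∀ u : E, fderiv ℝ Y x u + Γ x u (Y x) ∈ L x

/-- The Nijenhuis torsion of the (1,1)-tensor field `N`, evaluated at `x` on `u, v`:
`T_N(X,Y) = [NX,NY] − N[NX,Y] − N[X,NY] + N²[X,Y]` (tensorial, on constant fields). -/
def nijTorsion (N : E → E →L[ℝ] E) (x u v : E) : E :=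
  lieVF (fun y => N y u) (fun y => N y v) x
    - N x (lieVF (fun y => N y u) (fun _ => v) x)
    - N x (lieVF (fun _ => u) (fun y => N y v) x)
    + N x (N x (lieVF (fun _ => u) (fun _ => v) x))

/-- `I_k = (1/k) Tr (N^k)`. -/
def traceInv (N : E → E →L[ℝ] E) (k : ℕ) (x : E) : ℝ :=
  (k : ℝ)⁻¹ * LinearMap.trace ℝ E ((N x ^ k : E →L[ℝ] E) : E →ₗ[ℝ] E)

section LinearAlgebra

open Polynomial

variable {K V ι : Type*} [Field K] [AddCommGroup V] [Module K V]

theorem finrank_iSup_of_iSupIndep [FiniteDimensional K V] [Fintype ι] {S : ι → Submodule K V}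
    (hS : iSupIndep S) : finrank K ↥(⨆ i, S i) = ∑ i, finrank K (S i) := by
  classical
  rw [Submodule.iSup_eq_range_dfinsupp_lsum,
    LinearMap.finrank_range_of_inj hS.dfinsupp_lsum_injective]
  exact finrank_directSum K fun i => S i

theorem isSelfAdjoint_aeval {ω : LinearMap.BilinForm K V} {A : End K V} (hA : ω.IsSelfAdjoint A)
    (q : K[X]) : ω.IsSelfAdjoint (aeval A q) := by
  induction q using Polynomial.induction_on' with
  | add q r hq hr =>
    intro u v
    simp [hq u v, hr u v]
  | monomial k c =>
    have hpow : ω.IsSelfAdjoint ⇑(A ^ k) := by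
      induction k with
      | zero => exact fun _ _ => rfl
      | succ k ih =>
        intro u v
        rw [pow_succ, Module.End.mul_apply, ih, hA, ← Module.End.mul_apply A, ← pow_succ',
          pow_succ]
    intro u v
    simp [aeval_monomial, hpow u v]

theorem apply_aeval_self_eq_zero [NeZero (2 : K)] {ω : LinearMap.BilinForm K V} (hω : ω.IsAlt)
    {A : End K V} (hA : ω.IsSelfAdjoint A) (q : K[X]) (w : V) : ω (aeval A q w) w = 0 := by
  have h := hω.neg_eq (aeval A q w) w
  rw [← isSelfAdjoint_aeval hA q w w, neg_eq_iff_add_eq_zero, ← two_mul] at h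
  exact (mul_eq_zero.1 h).resolve_left two_ne_zero

theorem range_eq_orthogonal_ker [FiniteDimensional K V] {ω : LinearMap.BilinForm K V}
    (hω : ω.IsRefl) (hnd : ω.Nondegenerate) {A : End K V} (hA : ω.IsSelfAdjoint A) :
    LinearMap.range A = ω.orthogonal (LinearMap.ker A) := by
  rw [← LinearMap.BilinForm.orthogonal_orthogonal hnd hω (LinearMap.range A)]
  congr 1
  ext u
  simp only [LinearMap.BilinForm.mem_orthogonal_iff, LinearMap.mem_range, forall_exists_index,
    forall_apply_eq_imp_iff, LinearMap.mem_ker, hA _ u]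
  exact ⟨fun h => hnd.2 _ h, fun h w => by rw [h, map_zero]⟩

/- If `ker A` were a line `K v`, then `range A = v^⊥` would allow to extend any equation
`A ^ m w = v` to `A ^ (m + 1) w' = v`, because `ω v w = ω (A ^ m w) w = 0`; but `v` is not in the
range of a high power of `A`. -/
theorem two_le_finrank_ker [NeZero (2 : K)] [FiniteDimensional K V]
    {ω : LinearMap.BilinForm K V} (hω : ω.IsAlt) (hnd : ω.Nondegenerate) {A : End K V}
    (hA : ω.IsSelfAdjoint A) (hker : LinearMap.ker A ≠ ⊥) : 2 ≤ finrank K (LinearMap.ker A) := by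
  by_contra! hlt
  have hone : finrank K (LinearMap.ker A) = 1 :=
    le_antisymm (by lia) (Submodule.one_le_finrank_iff.2 hker)
  obtain ⟨⟨v, hv⟩, hv0, hspan⟩ := finrank_eq_one_iff'.1 hone
  have hchain (m : ℕ) : ∃ w, (A ^ m) w = v := by
    induction m with
    | zero => exact ⟨v, rfl⟩
    | succ m ih =>
      obtain ⟨w, hw⟩ := ih
      have hmem : w ∈ LinearMap.range A := by
        rw [range_eq_orthogonal_ker hω.isRefl hnd hA, LinearMap.BilinForm.mem_orthogonal_iff]
        intro u hu
        obtain ⟨c, hc⟩ := hspan ⟨u, hu⟩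
        obtain rfl : c • v = u := congrArg Subtype.val hc
        have horth : ω v w = 0 := by
          simpa [hw] using apply_aeval_self_eq_zero hω hA (X ^ m) w
        rw [map_smul, LinearMap.smul_apply, horth, smul_zero]
      obtain ⟨w', rfl⟩ := hmem
      exact ⟨w', by rw [pow_succ, Module.End.mul_apply, hw]⟩
  obtain ⟨w, hw⟩ := hchain (finrank K V)
  have hw' : w ∈ LinearMap.ker (A ^ (finrank K V + 1)) := by
    rw [LinearMap.mem_ker, pow_succ', Module.End.mul_apply, hw]
    exact hv
  rw [Module.End.ker_pow_eq_ker_pow_finrank_of_le (Nat.le_succ _), LinearMap.mem_ker, hw] at hw'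
  exact hv0 (Subtype.ext hw')

theorem two_le_finrank_eigenspace [NeZero (2 : K)] [FiniteDimensional K V]
    {ω : LinearMap.BilinForm K V} (hω : ω.IsAlt) (hnd : ω.Nondegenerate) {A : End K V}
    (hA : ω.IsSelfAdjoint A) {l : K} (hl : A.HasEigenvalue l) :
    2 ≤ finrank K (A.eigenspace l) := by
  have hker : A.eigenspace l ≠ ⊥ := hl
  rw [Module.End.eigenspace_def] at hker ⊢
  exact two_le_finrank_ker hω hnd (fun u v => by simp [hA u v]) hker

section Card

variable [NeZero (2 : K)] [FiniteDimensional K V] [Fintype ι] {ω : LinearMap.BilinForm K V}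
  {A : End K V} {l : ι → K}

theorem iSup_eigenspace_eq_top_of_finrank_eq (hω : ω.IsAlt) (hnd : ω.Nondegenerate)
    (hA : ω.IsSelfAdjoint A) (hl : Function.Injective l) (heig : ∀ i, A.HasEigenvalue (l i))
    (hdim : finrank K V = 2 * Fintype.card ι) : ⨆ i, A.eigenspace (l i) = ⊤ := by
  refine Submodule.eq_top_of_finrank_eq (le_antisymm (Submodule.finrank_le _) ?_)
  calc finrank K V = ∑ _i : ι, 2 := by simp [hdim, mul_comm]
    _ ≤ ∑ i, finrank K (A.eigenspace (l i)) :=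
      Finset.sum_le_sum fun i _ => two_le_finrank_eigenspace hω hnd hA (heig i)
    _ = finrank K ↥(⨆ i, A.eigenspace (l i)) :=
      (finrank_iSup_of_iSupIndep (A.eigenspaces_iSupIndep.comp hl)).symm

theorem finrank_eigenspace_eq_two (hω : ω.IsAlt) (hnd : ω.Nondegenerate)
    (hA : ω.IsSelfAdjoint A) (hl : Function.Injective l) (heig : ∀ i, A.HasEigenvalue (l i))
    (hdim : finrank K V = 2 * Fintype.card ι) (i : ι) : finrank K (A.eigenspace (l i)) = 2 := by
  have hsum : ∑ _i : ι, 2 = ∑ i, finrank K (A.eigenspace (l i)) := calc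
    ∑ _i : ι, 2 = finrank K ↥(⨆ i, A.eigenspace (l i)) := by
      rw [iSup_eigenspace_eq_top_of_finrank_eq hω hnd hA hl heig hdim, finrank_top, hdim]
      simp [mul_comm]
    _ = ∑ i, finrank K (A.eigenspace (l i)) :=
      finrank_iSup_of_iSupIndep (A.eigenspaces_iSupIndep.comp hl)
  exact ((Finset.sum_eq_sum_iff_of_le fun i _ =>
    two_le_finrank_eigenspace hω hnd hA (heig i)).1 hsum i (Finset.mem_univ i)).symm

end Card

theorem wedge_eq_zero_of_finrank_eq_two {ω : LinearMap.BilinForm K V} (hω : ω.IsAlt)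
    {S : Submodule K V} (hS : finrank K S = 2) (ℓ : V →ₗ[K] K) {a b c : V} (ha : a ∈ S)
    (hb : b ∈ S) (hc : c ∈ S) : ℓ a * ω b c - ℓ b * ω a c + ℓ c * ω a b = 0 := by
  have : FiniteDimensional K S := FiniteDimensional.of_finrank_pos (by lia)
  let e := finBasisOfFinrankEq K S hS
  have hcoord {v : V} (hv : v ∈ S) : ∃ s t : K, v = s • (e 0 : V) + t • (e 1 : V) := by
    have h := congrArg Subtype.val (e.sum_repr ⟨v, hv⟩)
    rw [Fin.sum_univ_two] at h
    exact ⟨_, _, h.symm⟩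
  obtain ⟨a₀, a₁, rfl⟩ := hcoord ha
  obtain ⟨b₀, b₁, rfl⟩ := hcoord hb
  obtain ⟨c₀, c₁, rfl⟩ := hcoord hc
  simp only [map_add, map_smul, LinearMap.add_apply, LinearMap.smul_apply, smul_eq_mul,
    hω.self_eq_zero, ← hω.neg_eq (e 0 : V) (e 1 : V)]
  ring

theorem linearIndependent_of_separating [FiniteDimensional K V] [Fintype ι]
    {f : ι → V →ₗ[K] K} (hcard : Fintype.card ι = finrank K V)
    (hf : ∀ v, (∀ i, f i v = 0) → v = 0) : LinearIndependent K f := by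
  classical
  have hinj : Function.Injective (LinearMap.pi f) :=
    (injective_iff_map_eq_zero _).2 fun v hv => hf v (congrFun hv)
  have hsurj : Function.Surjective (LinearMap.pi f) :=
    (LinearMap.injective_iff_surjective_of_finrank_eq_finrank (by simp [hcard])).1 hinj
  rw [Fintype.linearIndependent_iff]
  intro c hc i
  obtain ⟨v, hv⟩ := hsurj (Pi.single i 1)
  have hfv (j : ι) : f j v = (Pi.single i 1 : ι → K) j := congrFun hv j
  simpa [hfv, Pi.single_apply] using congrArg (fun L => L v) hc

end LinearAlgebra

section SpectralProjection

open Polynomial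

variable {𝕜 V ι : Type*} [NontriviallyNormedField 𝕜] [NormedAddCommGroup V] [NormedSpace 𝕜 V]
  [Fintype ι] [DecidableEq ι]

/-- The projection onto the `l i`-eigenspace of `A` along the `l j`-eigenspaces with `j ≠ i`, as the
Lagrange interpolation polynomial evaluated at `A`. It has this meaning when `l` is injective and
these eigenspaces span `V`. -/
def spectralProj (A : V →L[𝕜] V) (l : ι → 𝕜) (i : ι) : V →L[𝕜] V :=
  aeval A (Lagrange.basis Finset.univ l i)

theorem coe_spectralProj (A : V →L[𝕜] V) (l : ι → 𝕜) (i : ι) :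
    (spectralProj A l i : V →ₗ[𝕜] V) =
      aeval (A : End 𝕜 V) (Lagrange.basis Finset.univ l i) :=
  hom_eval₂ _ (algebraMap 𝕜 (V →L[𝕜] V)) ContinuousLinearMap.toLinearMapRingHom A

variable {A : V →L[𝕜] V} {l : ι → 𝕜}

theorem spectralProj_apply_of_mem_eigenspace (hl : Function.Injective l) {i j : ι} {v : V}
    (hv : A v = l j • v) : spectralProj A l i v = if i = j then v else 0 := by
  rw [← ContinuousLinearMap.coe_coe, coe_spectralProj,
    Module.End.aeval_apply_of_mem_apply_eq_smul (by simpa using hv)]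
  split_ifs with hij
  · rw [hij, Lagrange.eval_basis_self hl.injOn (Finset.mem_univ j), one_smul]
  · rw [Lagrange.eval_basis_of_ne hij (Finset.mem_univ j), zero_smul]

theorem eqOn_iSup_eigenspace {ι : Type*} {l : ι → 𝕜} {f g : V →L[𝕜] V}
    (htop : ⨆ i, End.eigenspace (A : End 𝕜 V) (l i) = ⊤)
    (hfg : ∀ i v, A v = l i • v → f v = g v) : f = g := by
  ext v
  have hv : v ∈ ⨆ i, End.eigenspace (A : End 𝕜 V) (l i) := htop ▸ Submodule.mem_top
  have hle : ⨆ i, End.eigenspace (A : End 𝕜 V) (l i) ≤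
      LinearMap.eqLocus (f : V →ₗ[𝕜] V) (g : V →ₗ[𝕜] V) :=
    iSup_le fun i w hw => hfg i w (Module.End.mem_eigenspace_iff.1 hw)
  exact hle hv

variable (hl : Function.Injective l) (htop : ⨆ i, End.eigenspace (A : End 𝕜 V) (l i) = ⊤)
include hl htop

theorem sum_spectralProj : ∑ i, spectralProj A l i = 1 :=
  eqOn_iSup_eigenspace htop fun j v hv => by
    simp [sum_apply, spectralProj_apply_of_mem_eigenspace hl hv]

theorem mul_spectralProj (i : ι) : A * spectralProj A l i = l i • spectralProj A l i :=
  eqOn_iSup_eigenspace htop fun j v hv => by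
    by_cases hij : i = j <;> simp [spectralProj_apply_of_mem_eigenspace hl hv, hij, hv]

theorem spectralProj_mul (i : ι) : spectralProj A l i * A = l i • spectralProj A l i :=
  eqOn_iSup_eigenspace htop fun j v hv => by
    by_cases hij : i = j <;> simp [spectralProj_apply_of_mem_eigenspace hl hv, hij, hv]

theorem isIdempotentElem_spectralProj (i : ι) : IsIdempotentElem (spectralProj A l i) :=
  eqOn_iSup_eigenspace htop fun j v hv => by
    by_cases hij : i = j <;> simp [spectralProj_apply_of_mem_eigenspace hl hv, hij]

theorem comp_spectralProj_eq_self {F : Type*} [NormedAddCommGroup F] [NormedSpace 𝕜 F]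
    {α : V →L[𝕜] F} {i : ι} (hα : ∀ v, α (A v) = l i • α v) :
    α.comp (spectralProj A l i) = α := by
  have hne (j : ι) (hj : j ≠ i) (v : V) : α (spectralProj A l j v) = 0 := by
    have h := hα (spectralProj A l j v)
    rw [← mul_apply_eq_comp, mul_spectralProj hl htop, smul_apply, map_smul,
      ← sub_eq_zero, ← sub_smul] at h
    exact (smul_eq_zero.1 h).resolve_left (sub_ne_zero.2 (hl.ne hj))
  ext v
  calc α (spectralProj A l i v) = ∑ j, α (spectralProj A l j v) :=
        (Finset.sum_eq_single i (fun j _ hj => hne j hj v) (by simp)).symm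
    _ = α ((∑ j, spectralProj A l j) v) := by rw [sum_apply, map_sum]
    _ = α v := by rw [sum_spectralProj hl htop, one_apply_eq_self]

end SpectralProjection

open Polynomial in
theorem contDiffOn_spectralProj {𝕜 F V ι : Type*} [NontriviallyNormedField 𝕜]
    [NormedAddCommGroup F] [NormedSpace 𝕜 F] [NormedAddCommGroup V] [NormedSpace 𝕜 V] [Fintype ι]
    [DecidableEq ι] {n : WithTop ℕ∞} {s : Set F} {A : F → V →L[𝕜] V} {l : ι → F → 𝕜}
    (hA : ContDiffOn 𝕜 n A s) (hl : ∀ i, ContDiffOn 𝕜 n (l i) s)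
    (hinj : ∀ x ∈ s, Function.Injective fun i => l i x) (i : ι) :
    ContDiffOn 𝕜 n (fun x => spectralProj (A x) (fun j => l j x) i) s := by
  have hprod := Finset.prod_induction (s := Finset.univ.erase i)
    (fun j (x : F) => Lagrange.basisDivisor (l i x) (l j x))
    (fun q => ContDiffOn 𝕜 n (fun x => aeval (A x) (q x)) s)
    (fun q r hq hr => by simpa [ContinuousLinearMap.mul_def] using hq.clm_comp hr)
    (by simpa using contDiffOn_const)
    (fun j hj => by
      have hne (x : F) (hx : x ∈ s) : l i x - l j x ≠ 0 :=
        sub_ne_zero.2 ((hinj x hx).ne (Finset.ne_of_mem_erase hj).symm)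
      have hdiv := (((hl i).sub (hl j)).inv hne).smul
        (hA.sub ((hl j).smul (contDiffOn_const (c := (1 : V →L[𝕜] V)))))
      refine hdiv.congr fun x _ => ?_
      simp [Lagrange.basisDivisor, Algebra.algebraMap_eq_smul_one])
  simpa [spectralProj, Lagrange.basis, Finset.prod_apply] using hprod

theorem differentiableAt_of_contDiffOn {𝕜 F G : Type*} [NontriviallyNormedField 𝕜]
    [NormedAddCommGroup F] [NormedSpace 𝕜 F] [NormedAddCommGroup G] [NormedSpace 𝕜 G] {f : F → G}
    {U : Set F} {x : F} (hU : IsOpen U) (hf : ContDiffOn 𝕜 (⊤ : ℕ∞) f U) (hx : x ∈ U) :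
    DifferentiableAt 𝕜 f x :=
  (hf.contDiffAt (hU.mem_nhds hx)).differentiableAt (by simp)

section ExteriorDerivative

open Filter Topology

/-- The wedge product `α ∧ σ` of a covector `α` and a skew-symmetric bilinear form `σ`, evaluated on
`u, v, w`. -/
def wedge12 (α : E →L[ℝ] ℝ) (σ : E →L[ℝ] E →L[ℝ] ℝ) (u v w : E) : ℝ :=
  α u * σ v w - α v * σ u w + α w * σ u v

theorem wedge12_smul (c : ℝ) (α : E →L[ℝ] ℝ) (σ : E →L[ℝ] E →L[ℝ] ℝ) (u v w : E) :
    wedge12 (c • α) σ u v w = c * wedge12 α σ u v w := by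
  simp only [wedge12, smul_apply, smul_eq_mul]
  ring

theorem extDeriv2_eq {ω : E → E →L[ℝ] E →L[ℝ] ℝ} {x : E} (hω : DifferentiableAt ℝ ω x)
    (u v w : E) :
    extDeriv2 ω x u v w = fderiv ℝ ω x u v w - fderiv ℝ ω x v u w + fderiv ℝ ω x w u v := by
  have key (a b c : E) : fderiv ℝ (fun y => ω y b c) x a = fderiv ℝ ω x a b c := by
    rw [((hω.hasFDerivAt.clm_apply (hasFDerivAt_const b x)).clm_apply
      (hasFDerivAt_const c x)).fderiv]
    simp
  simp only [extDeriv2, key]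

theorem nijTorsion_eq {N : E → E →L[ℝ] E} {x : E} (hN : DifferentiableAt ℝ N x) (u v : E) :
    nijTorsion N x u v = fderiv ℝ N x (N x u) v - fderiv ℝ N x (N x v) u
      + N x (fderiv ℝ N x v u) - N x (fderiv ℝ N x u v) := by
  have key (a b : E) : fderiv ℝ (fun y => N y b) x a = fderiv ℝ N x a b := by
    rw [(hN.hasFDerivAt.clm_apply (hasFDerivAt_const b x)).fderiv]
    simp
  simp [nijTorsion, lieVF, key]

theorem extDeriv2_congr {ω ω' : E → E →L[ℝ] E →L[ℝ] ℝ} {x : E} (h : ω =ᶠ[𝓝 x] ω') :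
    extDeriv2 ω x = extDeriv2 ω' x := by
  ext u v w
  have key (a b c : E) : fderiv ℝ (fun y => ω y b c) x a = fderiv ℝ (fun y => ω' y b c) x a := by
    rw [EventuallyEq.fderiv_eq (h.mono fun y hy => by rw [hy])]
  simp only [extDeriv2, key]

theorem extDeriv2_sum_smul {ι : Type*} [Fintype ι] {f : ι → E → ℝ}
    {σ : ι → E → E →L[ℝ] E →L[ℝ] ℝ} {x : E} (hf : ∀ i, DifferentiableAt ℝ (f i) x)
    (hσ : ∀ i, DifferentiableAt ℝ (σ i) x) (u v w : E) :
    extDeriv2 (fun y => ∑ i, f i y • σ i y) x u v w =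
      ∑ i, (f i x * extDeriv2 (σ i) x u v w + wedge12 (fderiv ℝ (f i) x) (σ i x) u v w) := by
  have hσ' (a b : E) (i : ι) : DifferentiableAt ℝ (fun y => σ i y a b) x :=
    ((hσ i).clm_apply (differentiableAt_const a)).clm_apply (differentiableAt_const b)
  have hderiv (a b c : E) : fderiv ℝ (fun y => ∑ i, f i y * σ i y b c) x a =
      ∑ i, (f i x * fderiv ℝ (fun y => σ i y b c) x a + fderiv ℝ (f i) x a * σ i x b c) := by
    simp only [fderiv_fun_sum fun i _ => (hf i).fun_mul (hσ' b c i), sum_apply,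
      fderiv_fun_mul (hf _) (hσ' b c _), add_apply, smul_apply, smul_eq_mul, mul_comm]
  simp only [extDeriv2, wedge12, sum_apply, smul_apply, smul_eq_mul, hderiv,
    ← Finset.sum_sub_distrib, ← Finset.sum_add_distrib]
  exact Finset.sum_congr rfl fun i _ => by ring

theorem extDeriv2_comp_sq {ω : E → E →L[ℝ] E →L[ℝ] ℝ} {N : E → E →L[ℝ] E} {x : E}
    (hω : DifferentiableAt ℝ ω x) (hN : DifferentiableAt ℝ N x)
    (hcompat : ∀ u v, ω x (N x u) v = ω x u (N x v)) (u v w : E) :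
    extDeriv2 (fun y => (ω y).comp (N y ^ 2)) x u v w =
      extDeriv2 (fun y => (ω y).comp (N y)) x (N x u) v w
        + extDeriv2 (fun y => (ω y).comp (N y)) x u (N x v) w
        - extDeriv2 ω x (N x u) (N x v) w - ω x (nijTorsion N x u v) w := by
  have hsq : DifferentiableAt ℝ (fun y => (N y).comp (N y)) x := hN.clm_comp hN
  simp only [pow_two, ContinuousLinearMap.mul_def]
  rw [extDeriv2_eq (hω.clm_comp hsq), extDeriv2_eq (hω.clm_comp hN),
    extDeriv2_eq (hω.clm_comp hN), extDeriv2_eq hω, nijTorsion_eq hN, fderiv_clm_comp hω hsq,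
    fderiv_clm_comp hN hN, fderiv_clm_comp hω hN]
  simp [hcompat]
  ring

/- The recursion of `extDeriv2_comp_sq`, for `ω (N ^ k ·, ·)` in place of `ω`. -/
theorem isClosed2On_comp_pow {U : Set E} {ω : E → E →L[ℝ] E →L[ℝ] ℝ} {N : E → E →L[ℝ] E}
    (hω : ∀ x ∈ U, DifferentiableAt ℝ ω x) (hN : ∀ x ∈ U, DifferentiableAt ℝ N x)
    (hcompat : ∀ x ∈ U, ∀ u v, ω x (N x u) v = ω x u (N x v))
    (hT : ∀ x ∈ U, ∀ u v, nijTorsion N x u v = 0) (hcl : IsClosed2On ω U)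
    (hΩcl : IsClosed2On (fun y => (ω y).comp (N y)) U) (k : ℕ) :
    IsClosed2On (fun y => (ω y).comp (N y ^ k)) U := by
  induction k using Nat.twoStepInduction with
  | zero => exact hcl
  | one => simpa using hΩcl
  | more k hk hk1 =>
    intro x hx u v w
    have hcompat' (a b : E) : (ω x).comp (N x ^ k) (N x a) b = (ω x).comp (N x ^ k) a (N x b) := by
      simp only [ContinuousLinearMap.comp_apply]
      rw [← hcompat x hx, ← mul_apply_eq_comp, ← mul_apply_eq_comp, ← pow_succ, ← pow_succ']
    have hpow (m : ℕ) (y : E) :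
        (ω y).comp (N y ^ (k + m)) = ((ω y).comp (N y ^ k)).comp (N y ^ m) := by
      rw [pow_add, ContinuousLinearMap.mul_def, ContinuousLinearMap.comp_assoc]
    have hrec :=
      extDeriv2_comp_sq ((hω x hx).clm_comp ((hN x hx).fun_pow k)) (hN x hx) hcompat' u v w
    have hk1' (a b c : E) :
        extDeriv2 (fun y => ((ω y).comp (N y ^ k)).comp (N y)) x a b c = 0 := by
      simpa only [hpow, pow_one] using hk1 x hx a b c
    rw [hk1', hk1', hk x hx, hT x hx, map_zero, zero_apply] at hrec
    simpa only [hpow, add_zero, sub_zero] using hrec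

/- If `N X = l X` and `q` is a left eigenvector for the same eigenvalue, then differentiating
`N X = l X` gives `q ((∂_a N) X) = dl(a) q(X)`, and the torsion evaluated on `X` says that
`a ↦ q ((∂_a N) X)` is a left eigenvector of `N`. -/
theorem fderiv_eigenvalue_apply {F : Type*} [NormedAddCommGroup F] [NormedSpace ℝ F]
    {N : E → E →L[ℝ] E} {X : E → E} {l : E → ℝ} {x : E} (hN : DifferentiableAt ℝ N x)
    (hX : DifferentiableAt ℝ X x) (hl : DifferentiableAt ℝ l x)
    (heig : ∀ᶠ y in 𝓝 x, N y (X y) = l y • X y) {q : E →L[ℝ] F}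
    (hq : ∀ v, q (N x v) = l x • q v) (hqX : q (X x) ≠ 0)
    (hT : ∀ u, nijTorsion N x u (X x) = 0) (a : E) :
    fderiv ℝ l x (N x a) = l x * fderiv ℝ l x a := by
  have hderiv (b : E) : q (fderiv ℝ N x b (X x)) = fderiv ℝ l x b • q (X x) := by
    have h := EventuallyEq.fderiv_eq (𝕜 := ℝ) heig
    rw [fderiv_clm_apply hN hX, fderiv_fun_smul hl hX] at h
    simpa [hq] using congrArg q (congrArg (fun L => L b) h)
  have htorsion : q (fderiv ℝ N x (N x a) (X x)) = l x • q (fderiv ℝ N x a (X x)) := by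
    have h := congrArg q (hT a)
    rw [nijTorsion_eq hN, heig.self_of_nhds] at h
    simpa [hq, sub_eq_zero] using h
  rw [hderiv, hderiv, smul_smul] at htorsion
  exact smul_left_injective ℝ hqX htorsion

/- `0 = d (∑ i, l i ^ k • σ i) = ∑ i, l i ^ k • dσ i` for every `k` is a Vandermonde system. -/
theorem extDeriv2_eq_zero_of_sum_pow_smul {n : ℕ} {l : Fin n → E → ℝ}
    {σ : Fin n → E → E →L[ℝ] E →L[ℝ] ℝ} {x : E} (hl : ∀ i, DifferentiableAt ℝ (l i) x)
    (hσ : ∀ i, DifferentiableAt ℝ (σ i) x) (hinj : Function.Injective fun i => l i x)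
    {u v w : E} (hwedge : ∀ i, wedge12 (fderiv ℝ (l i) x) (σ i x) u v w = 0)
    (hcl : ∀ k : ℕ, extDeriv2 (fun y => ∑ i, l i y ^ k • σ i y) x u v w = 0) (i : Fin n) :
    extDeriv2 (σ i) x u v w = 0 := by
  refine congrFun (Matrix.eq_zero_of_forall_pow_sum_mul_pow_eq_zero
    (v := fun i => extDeriv2 (σ i) x u v w) hinj fun k => ?_) i
  have hlk (j : Fin n) : DifferentiableAt ℝ (fun y => l j y ^ (k : ℕ)) x := (hl j).fun_pow _
  rw [← hcl k, extDeriv2_sum_smul hlk hσ]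
  refine Finset.sum_congr rfl fun j _ => ?_
  rw [fderiv_fun_pow _ (hl j), wedge12_smul, hwedge]
  ring

end ExteriorDerivative

section ParametricIntegral

universe u v

variable {H : Type u} {G : Type v} [NormedAddCommGroup H] [NormedAddCommGroup G] {V : Set H}
  {T : Set ℝ} {a b : ℝ}

theorem exists_ball_bound_of_continuousOn {g : H × ℝ → G} (hV : IsOpen V) (hT : IsOpen T)
    (hg : ContinuousOn g (V ×ˢ T)) {K : Set ℝ} (hK : IsCompact K) (hKT : K ⊆ T) {x : H}
    (hx : x ∈ V) : ∃ r > 0, ∃ C, Metric.ball x r ⊆ V ∧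
      ∀ y ∈ Metric.ball x r, ∀ s ∈ K, ‖g (y, s)‖ ≤ C := by
  obtain ⟨C, hC⟩ := (isCompact_singleton.prod hK).exists_bound_of_continuousOn
    (hg.mono (prod_mono (singleton_subset_iff.2 hx) hKT))
  obtain ⟨W, S, hW, -, hxW, hKS, hWS⟩ := generalized_tube_lemma isCompact_singleton hK
    (hg.norm.isOpen_inter_preimage (hV.prod hT) (isOpen_Iio (a := C + 1)))
    fun z hz => ⟨⟨singleton_subset_iff.2 hx hz.1, hKT hz.2⟩, (hC z hz).trans_lt (lt_add_one C)⟩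
  obtain ⟨r, hr, hrW⟩ := Metric.isOpen_iff.1 (hW.inter hV) x ⟨hxW rfl, hx⟩
  exact ⟨r, hr, C + 1, hrW.trans inter_subset_right, fun y hy s hs =>
    le_of_lt (hWS ⟨(hrW hy).1, hKS hs⟩).2⟩

theorem continuousOn_slice {g : H × ℝ → G} (hg : ContinuousOn g (V ×ˢ T)) (hab : uIcc a b ⊆ T)
    {x : H} (hx : x ∈ V) : ContinuousOn (fun s => g (x, s)) (uIcc a b) :=
  hg.comp (by fun_prop) fun _ hs => ⟨hx, hab hs⟩

theorem aestronglyMeasurable_slice {g : H × ℝ → G} (hg : ContinuousOn g (V ×ˢ T))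
    (hab : uIcc a b ⊆ T) {x : H} (hx : x ∈ V) : MeasureTheory.AEStronglyMeasurable
      (fun s => g (x, s)) (MeasureTheory.volume.restrict (uIoc a b)) :=
  ((continuousOn_slice hg hab hx).mono uIoc_subset_uIcc).aestronglyMeasurable measurableSet_uIoc

variable [NormedSpace ℝ H] [NormedSpace ℝ G]

theorem hasFDerivAt_intervalIntegral_of_contDiffOn {f : H × ℝ → G} (hV : IsOpen V)
    (hT : IsOpen T) (hab : uIcc a b ⊆ T) (hf : ContDiffOn ℝ 1 f (V ×ˢ T)) {x : H} (hx : x ∈ V) :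
    HasFDerivAt (fun y => ∫ s in a..b, f (y, s))
      (∫ s in a..b, (fderiv ℝ f (x, s)).comp (ContinuousLinearMap.inl ℝ H ℝ)) x := by
  have hVT : IsOpen (V ×ˢ T) := hV.prod hT
  have hf' : ContinuousOn (fun z => (fderiv ℝ f z).comp (ContinuousLinearMap.inl ℝ H ℝ))
      (V ×ˢ T) :=
    (hf.continuousOn_fderiv_of_isOpen hVT le_rfl).clm_comp continuousOn_const
  obtain ⟨r, hr, C, hrV, hC⟩ := exists_ball_bound_of_continuousOn hV hT hf' isCompact_uIcc hab hx
  refine intervalIntegral.hasFDerivAt_integral_of_dominated_of_fderiv_le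
    (F' := fun y s => (fderiv ℝ f (y, s)).comp (ContinuousLinearMap.inl ℝ H ℝ))
    (bound := fun _ => C) (Metric.ball_mem_nhds x hr) ?_
    (continuousOn_slice hf.continuousOn hab hx).intervalIntegrable
    (aestronglyMeasurable_slice hf' hab hx)
    (.of_forall fun s hs y hy => hC y hy s (uIoc_subset_uIcc hs)) intervalIntegrable_const
    (.of_forall fun s hs y hy => ?_)
  · filter_upwards [hV.mem_nhds hx] with y hy
    exact aestronglyMeasurable_slice hf.continuousOn hab hy
  · have hfd : DifferentiableAt ℝ f (y, s) := (hf.differentiableOn one_ne_zero).differentiableAt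
      (hVT.mem_nhds ⟨hrV hy, hab (uIoc_subset_uIcc hs)⟩)
    exact hfd.hasFDerivAt.comp y (hasFDerivAt_prodMk_left y s)

/- Differentiating under the integral sign changes the target `G` to `H →L[ℝ] G`, so the induction
runs over all targets in a universe that contains `H`. -/
theorem contDiffOn_nat_intervalIntegral (hV : IsOpen V) (hT : IsOpen T)
    (hab : uIcc a b ⊆ T) (m : ℕ) {G : Type max u v} [NormedAddCommGroup G] [NormedSpace ℝ G]
    {f : H × ℝ → G} (hf : ContDiffOn ℝ (⊤ : ℕ∞) f (V ×ˢ T)) :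
    ContDiffOn ℝ m (fun y => ∫ s in a..b, f (y, s)) V := by
  have hd (x : H) (hx : x ∈ V) :=
    hasFDerivAt_intervalIntegral_of_contDiffOn hV hT hab (hf.of_le (by simp)) hx
  induction m generalizing G with
  | zero => exact contDiffOn_zero.2 fun x hx => (hd x hx).continuousAt.continuousWithinAt
  | succ m ih =>
    have hf' : ContDiffOn ℝ (⊤ : ℕ∞)
        (fun z => (fderiv ℝ f z).comp (ContinuousLinearMap.inl ℝ H ℝ)) (V ×ˢ T) :=
      (hf.fderiv_of_isOpen (hV.prod hT) (by simp)).clm_comp contDiffOn_const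
    rw [Nat.cast_succ, contDiffOn_succ_iff_fderiv_of_isOpen hV]
    exact ⟨fun x hx => (hd x hx).differentiableAt.differentiableWithinAt, by simp,
      (ih hf' fun x hx => hasFDerivAt_intervalIntegral_of_contDiffOn hV hT hab
        (hf'.of_le (by simp)) hx).congr fun x hx => (hd x hx).fderiv⟩

theorem contDiffOn_intervalIntegral {f : H × ℝ → G} (hV : IsOpen V) (hT : IsOpen T)
    (hab : uIcc a b ⊆ T) (hf : ContDiffOn ℝ (⊤ : ℕ∞) f (V ×ˢ T)) :
    ContDiffOn ℝ (⊤ : ℕ∞) (fun y => ∫ s in a..b, f (y, s)) V := by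
  have hd (x : H) (hx : x ∈ V) :=
    hasFDerivAt_intervalIntegral_of_contDiffOn hV hT hab (hf.of_le (by simp)) hx
  have hf' : ContDiffOn ℝ (⊤ : ℕ∞)
      (fun z => (fderiv ℝ f z).comp (ContinuousLinearMap.inl ℝ H ℝ)) (V ×ˢ T) :=
    (hf.fderiv_of_isOpen (hV.prod hT) (by simp)).clm_comp contDiffOn_const
  refine (contDiffOn_infty_iff_fderiv_of_isOpen hV).2
    ⟨fun x hx => (hd x hx).differentiableAt.differentiableWithinAt,
      contDiffOn_infty.2 fun m => ?_⟩
  exact (contDiffOn_nat_intervalIntegral hV hT hab m hf').congr fun x hx => (hd x hx).fderiv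

end ParametricIntegral

section Homotopy

variable {F G H : Type*} [NormedAddCommGroup F] [NormedSpace ℝ F] [NormedAddCommGroup G]
  [NormedSpace ℝ G] [NormedAddCommGroup H] [NormedSpace ℝ H]

/- The terms with the second derivative of `γ` cancel. -/
theorem fderiv_pullback_sub {β : F → F →L[ℝ] H} {γ : G → F} {z : G}
    (hβ : DifferentiableAt ℝ β (γ z)) (hγ : ContDiffAt ℝ 2 γ z) (a b : G) :
    fderiv ℝ (fun y => (β (γ y)).comp (fderiv ℝ γ y)) z a b
        - fderiv ℝ (fun y => (β (γ y)).comp (fderiv ℝ γ y)) z b a =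
      fderiv ℝ β (γ z) (fderiv ℝ γ z a) (fderiv ℝ γ z b)
        - fderiv ℝ β (γ z) (fderiv ℝ γ z b) (fderiv ℝ γ z a) := by
  have hγ₁ : DifferentiableAt ℝ γ z := hγ.differentiableAt (by simp)
  have hγ₂ : DifferentiableAt ℝ (fderiv ℝ γ) z :=
    (hγ.fderiv_right (m := 1) (by norm_num)).differentiableAt one_ne_zero
  have hsymm : IsSymmSndFDerivAt ℝ γ z :=
    hγ.isSymmSndFDerivAt (by rw [minSmoothness_of_isRCLikeNormedField])
  have hβγ : HasFDerivAt (fun y => β (γ y)) _ z := hβ.hasFDerivAt.comp z hγ₁.hasFDerivAt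
  rw [(hβγ.clm_comp hγ₂.hasFDerivAt).fderiv]
  simp [hsymm.eq a b]

/- By closedness in the directions `(u, 0)` and `(0, 1)`, the derivative of `α (x, s) (0, 1)` along
`u` is the derivative of `α (x, s) (u, 0)` along `s`. -/
theorem fderiv_intervalIntegral_apply_of_closed {V : Set F} {T : Set ℝ} {a b : ℝ}
    {α : F × ℝ → F × ℝ →L[ℝ] ℝ} (hV : IsOpen V) (hT : IsOpen T) (hab : uIcc a b ⊆ T)
    (hα : ContDiffOn ℝ 1 α (V ×ˢ T)) {x u : F} (hx : x ∈ V)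
    (hcl : ∀ s ∈ uIcc a b, fderiv ℝ α (x, s) (u, 0) (0, 1) = fderiv ℝ α (x, s) (0, 1) (u, 0)) :
    fderiv ℝ (fun y => ∫ s in a..b, α (y, s) (0, 1)) x u = α (x, b) (u, 0) - α (x, a) (u, 0) := by
  have hd (s : ℝ) (hs : s ∈ uIcc a b) : HasFDerivAt α (fderiv ℝ α (x, s)) (x, s) :=
    ((hα.differentiableOn one_ne_zero).differentiableAt
      ((hV.prod hT).mem_nhds ⟨hx, hab hs⟩)).hasFDerivAt
  have hf : ContDiffOn ℝ 1 (fun z => α z (0, 1)) (V ×ˢ T) := hα.clm_apply contDiffOn_const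
  have hf' : ContinuousOn (fun z => (fderiv ℝ (fun z => α z (0, 1)) z).comp
      (ContinuousLinearMap.inl ℝ F ℝ)) (V ×ˢ T) :=
    (hf.continuousOn_fderiv_of_isOpen (hV.prod hT) le_rfl).clm_comp continuousOn_const
  have hderiv (s : ℝ) (hs : s ∈ uIcc a b) : HasDerivAt (fun t => α (x, t) (u, 0))
      (((fderiv ℝ (fun z => α z (0, 1)) (x, s)).comp (ContinuousLinearMap.inl ℝ F ℝ)) u) s := by
    rw [((hd s hs).clm_apply (hasFDerivAt_const (0, 1) (x, s))).fderiv]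
    have hline : HasDerivAt (fun t : ℝ => (x, t)) (0, 1) s :=
      (hasDerivAt_const s x).prodMk (hasDerivAt_id s)
    exact (((hd s hs).comp_hasDerivAt s hline).clm_apply
      (hasDerivAt_const s (u, 0))).congr_deriv (by simp [hcl s hs])
  rw [(hasFDerivAt_intervalIntegral_of_contDiffOn hV hT hab hf hx).fderiv,
    ContinuousLinearMap.intervalIntegral_apply (continuousOn_slice hf' hab hx).intervalIntegrable,
    intervalIntegral.integral_eq_sub_of_hasDerivAt hderiv
      (((continuousOn_slice hf' hab hx).clm_apply continuousOn_const).intervalIntegrable)]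

end Homotopy

section LevelSets

/-- A smooth contraction, in `V`, of the level sets of `l` in `W`: the homotopy `γ`, with time in an
open neighbourhood `T` of `[0, 1]`, preserves `l`, ends at the identity, and at time `0` it is
stationary along the level sets. -/
structure IsLevelContraction (l : E → ℝ) (V W : Set E) (T : Set ℝ) (γ : E × ℝ → E) : Prop where
  isOpen : IsOpen W
  isOpen_time : IsOpen T
  Icc_subset_time : Icc 0 1 ⊆ T
  contDiffOn : ContDiffOn ℝ (⊤ : ℕ∞) γ (W ×ˢ T)
  mapsTo : MapsTo γ (W ×ˢ T) V
  comp_eq : ∀ z ∈ W ×ˢ T, l (γ z) = l z.1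
  apply_one : ∀ x ∈ W, γ (x, 1) = x
  fderiv_zero : ∀ x ∈ W, ∀ u, fderiv ℝ l x u = 0 → fderiv ℝ γ (x, 0) (u, 0) = 0

namespace IsLevelContraction

variable {l : E → ℝ} {V W : Set E} {T : Set ℝ} {γ : E × ℝ → E}

theorem subset (hγ : IsLevelContraction l V W T γ) : W ⊆ V := fun x hx =>
  hγ.apply_one x hx ▸ hγ.mapsTo ⟨hx, hγ.Icc_subset_time (right_mem_Icc.2 zero_le_one)⟩

theorem fderiv_apply_fderiv (hγ : IsLevelContraction l V W T γ)
    (hl : ∀ x ∈ V, DifferentiableAt ℝ l x) {z : E × ℝ} (hz : z ∈ W ×ˢ T) (w : E × ℝ) :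
    fderiv ℝ l (γ z) (fderiv ℝ γ z w) = fderiv ℝ l z.1 w.1 := by
  have hWT : IsOpen (W ×ˢ T) := hγ.isOpen.prod hγ.isOpen_time
  have hγd : DifferentiableAt ℝ γ z := differentiableAt_of_contDiffOn hWT hγ.contDiffOn hz
  have h₁ := (hl (γ z) (hγ.mapsTo hz)).hasFDerivAt.comp z hγd.hasFDerivAt
  have h₂ := (hl z.1 (hγ.subset hz.1)).hasFDerivAt.comp z hasFDerivAt_fst
  have h := h₁.unique (h₂.congr_of_eventuallyEq
    (Filter.mem_of_superset (hWT.mem_nhds hz) hγ.comp_eq))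
  exact congrArg (fun L => L w) h

theorem fderiv_one (hγ : IsLevelContraction l V W T γ) {x : E} (hx : x ∈ W) (u : E) :
    fderiv ℝ γ (x, 1) (u, 0) = u := by
  have hγd : DifferentiableAt ℝ γ (x, 1) :=
    differentiableAt_of_contDiffOn (hγ.isOpen.prod hγ.isOpen_time) hγ.contDiffOn
      ⟨hx, hγ.Icc_subset_time (right_mem_Icc.2 zero_le_one)⟩
  have h := (hγd.hasFDerivAt.comp x (hasFDerivAt_prodMk_left x 1)).unique
    ((hasFDerivAt_id x).congr_of_eventuallyEq
      (Filter.mem_of_superset (hγ.isOpen.mem_nhds hx) hγ.apply_one))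
  simpa using congrArg (fun L => L u) h

/- The potential is the integral of `β` along the paths `s ↦ γ (x, s)`. -/
theorem exists_potential (hγ : IsLevelContraction l V W T γ) (hV : IsOpen V)
    (hl : ∀ x ∈ V, DifferentiableAt ℝ l x) {β : E → E →L[ℝ] ℝ} (hβ : ContDiffOn ℝ (⊤ : ℕ∞) β V)
    (hcl : ∀ x ∈ V, ∀ u v, fderiv ℝ l x u = 0 → fderiv ℝ l x v = 0 →
      fderiv ℝ β x u v = fderiv ℝ β x v u) :
    ∃ μ : E → ℝ, ContDiffOn ℝ (⊤ : ℕ∞) μ W ∧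
      ∀ x ∈ W, ∀ u, fderiv ℝ l x u = 0 → fderiv ℝ μ x u = β x u := by
  have hWT : IsOpen (W ×ˢ T) := hγ.isOpen.prod hγ.isOpen_time
  have h01 : uIcc (0 : ℝ) 1 ⊆ T := uIcc_of_le (zero_le_one' ℝ) ▸ hγ.Icc_subset_time
  set α : E × ℝ → E × ℝ →L[ℝ] ℝ := fun z => (β (γ z)).comp (fderiv ℝ γ z) with hαdef
  have hα : ContDiffOn ℝ (⊤ : ℕ∞) α (W ×ˢ T) :=
    (hβ.comp hγ.contDiffOn hγ.mapsTo).clm_comp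
      (hγ.contDiffOn.fderiv_of_isOpen hWT (by simp))
  refine ⟨fun x => ∫ s in (0 : ℝ)..1, α (x, s) (0, 1),
    contDiffOn_intervalIntegral hγ.isOpen hγ.isOpen_time h01 (hα.clm_apply contDiffOn_const),
    fun x hx u hu => ?_⟩
  have hclosed (s : ℝ) (hs : s ∈ uIcc 0 1) :
      fderiv ℝ α (x, s) (u, 0) (0, 1) = fderiv ℝ α (x, s) (0, 1) (u, 0) := by
    have hz : (x, s) ∈ W ×ˢ T := ⟨hx, h01 hs⟩
    have hγz : γ (x, s) ∈ V := hγ.mapsTo hz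
    have htangent {w : E × ℝ} (hw : fderiv ℝ l x w.1 = 0) :
        fderiv ℝ l (γ (x, s)) (fderiv ℝ γ (x, s) w) = 0 :=
      (hγ.fderiv_apply_fderiv hl hz w).trans hw
    rw [← sub_eq_zero, fderiv_pullback_sub
      (differentiableAt_of_contDiffOn hV hβ hγz)
      ((hγ.contDiffOn.contDiffAt (hWT.mem_nhds hz)).of_le (WithTop.coe_le_coe.2 le_top)),
      hcl _ hγz _ _ (htangent hu) (htangent (map_zero _)), sub_self]
  rw [fderiv_intervalIntegral_apply_of_closed hγ.isOpen hγ.isOpen_time h01 (hα.of_le (by simp)) hx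
    hclosed]
  simp [hαdef, hγ.fderiv_one hx, hγ.fderiv_zero x hx u hu, hγ.apply_one x hx]

end IsLevelContraction

theorem exists_openPartialHomeomorph_contDiffOn [CompleteSpace E] {V : Set E} (hV : IsOpen V)
    {p : E} (hp : p ∈ V) {g : E → E} (hg : ContDiffOn ℝ (⊤ : ℕ∞) g V) {e : E ≃L[ℝ] E}
    (he : fderiv ℝ g p = e) :
    ∃ φ : OpenPartialHomeomorph E E, ⇑φ = g ∧ p ∈ φ.source ∧ φ.source ⊆ V ∧
      ContDiffOn ℝ (⊤ : ℕ∞) φ.symm φ.target := by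
  have hgat (x : E) (hx : x ∈ V) : ContDiffAt ℝ (⊤ : ℕ∞) g x := hg.contDiffAt (hV.mem_nhds hx)
  have hg' : HasFDerivAt g (e : E →L[ℝ] E) p :=
    he ▸ ((hgat p hp).differentiableAt (by simp)).hasFDerivAt
  have hinv : ∀ᶠ x in nhds p, fderiv ℝ g x ∈ range ((↑) : (E ≃L[ℝ] E) → E →L[ℝ] E) := by
    have hc : ContinuousAt (fderiv ℝ g) p :=
      ((hgat p hp).fderiv_right (m := 0) (by simp)).continuousAt
    exact hc (he ▸ ContinuousLinearEquiv.nhds e)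
  obtain ⟨O, hO, hOo, hpO⟩ := mem_nhds_iff.1 (Filter.inter_mem hinv (hV.mem_nhds hp))
  let φ₀ := (hgat p hp).toOpenPartialHomeomorph g hg' (by simp)
  have hsrc : (φ₀.restrOpen O hOo).source ⊆ O := inter_subset_right
  refine ⟨φ₀.restrOpen O hOo, rfl,
    ⟨(hgat p hp).mem_toOpenPartialHomeomorph_source hg' (by simp), hpO⟩,
    fun x hx => (hO (hsrc hx)).2, fun y hy => ?_⟩
  have hx := hO (hsrc ((φ₀.restrOpen O hOo).map_target hy))
  obtain ⟨e', he'⟩ := hx.1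
  refine ((φ₀.restrOpen O hOo).contDiffAt_symm (f₀' := e') hy ?_ (hgat _ hx.2)).contDiffWithinAt
  rw [he']
  exact ((hgat _ hx.2).differentiableAt (by simp)).hasFDerivAt

/- Near `p` the function `l` becomes the linear form `ℓ = dl(p)` in the chart
`x ↦ x + (l x - ℓ x) • Y`, where `ℓ Y = 1`. -/
theorem exists_chart_of_fderiv_ne_zero [CompleteSpace E] {V : Set E} (hV : IsOpen V) {p : E}
    (hp : p ∈ V) {l : E → ℝ} (hl : ContDiffOn ℝ (⊤ : ℕ∞) l V) (hdl : fderiv ℝ l p ≠ 0) :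
    ∃ (φ : OpenPartialHomeomorph E E) (ℓ : E →L[ℝ] ℝ) (Y : E), ℓ Y = 1 ∧ p ∈ φ.source ∧
      φ.source ⊆ V ∧ ContDiffOn ℝ (⊤ : ℕ∞) φ φ.source ∧ ContDiffOn ℝ (⊤ : ℕ∞) φ.symm φ.target ∧
      ∀ x, ℓ (φ x) = l x := by
  obtain ⟨Y₀, hY₀⟩ := DFunLike.ne_iff.1 hdl
  set ℓ := fderiv ℝ l p with hℓ
  set Y : E := (ℓ Y₀)⁻¹ • Y₀
  have hY : ℓ Y = 1 := by simp [Y, inv_mul_cancel₀ hY₀]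
  have hld : DifferentiableAt ℝ l p := differentiableAt_of_contDiffOn hV hl hp
  have hg : ContDiffOn ℝ (⊤ : ℕ∞) (fun x => x + (l x - ℓ x) • Y) V :=
    contDiffOn_id.add ((hl.sub ℓ.contDiff.contDiffOn).smul contDiffOn_const)
  have hg' : fderiv ℝ (fun x => x + (l x - ℓ x) • Y) p = ContinuousLinearEquiv.refl ℝ E := by
    have h := (hasFDerivAt_id p).add ((hld.hasFDerivAt.sub ℓ.hasFDerivAt).smul_const Y)
    refine h.fderiv.trans ?_
    ext v
    simp [hℓ]
  obtain ⟨φ, hφ, hpφ, hφV, hφsymm⟩ := exists_openPartialHomeomorph_contDiffOn hV hp hg hg'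
  refine ⟨φ, ℓ, Y, hY, hpφ, hφV, ?_, hφsymm, fun x => ?_⟩
  · rw [hφ]
    exact hg.mono hφV
  · simp [hφ, hY]

theorem fderiv_apply_inl_eq_zero_of_factor {F G : Type*} [NormedAddCommGroup F]
    [NormedSpace ℝ F] [NormedAddCommGroup G] [NormedSpace ℝ G] {γ : F × ℝ → G} {κ : ℝ → G}
    {l : F → ℝ} {x u : F} {s : ℝ} (hγ : DifferentiableAt ℝ γ (x, s))
    (hκ : DifferentiableAt ℝ κ (l x)) (hl : DifferentiableAt ℝ l x)
    (hfactor : ∀ y, γ (y, s) = κ (l y)) (hu : fderiv ℝ l x u = 0) :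
    fderiv ℝ γ (x, s) (u, 0) = 0 := by
  have hγ' := hγ.hasFDerivAt.comp (f := fun y => (y, s)) x (hasFDerivAt_prodMk_left x s)
  have hκl := hκ.hasFDerivAt.comp x hl.hasFDerivAt
  rw [show γ ∘ (fun y => (y, s)) = κ ∘ l from funext hfactor] at hγ'
  simpa [hu] using congrArg (fun L => L u) (hγ'.unique hκl)

/- In the chart, where `l` is linear, the contraction is linear along the level sets and towards
their intersections with the line `φ p + ℝ Y`. -/
theorem exists_isLevelContraction [CompleteSpace E] {V : Set E} (hV : IsOpen V) {p : E}
    (hp : p ∈ V) {l : E → ℝ} (hl : ContDiffOn ℝ (⊤ : ℕ∞) l V) (hdl : fderiv ℝ l p ≠ 0) :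
    ∃ W T γ, p ∈ W ∧ IsLevelContraction l V W T γ := by
  obtain ⟨φ, ℓ, Y, hY, hpφ, hφV, hφ, hφsymm, hℓφ⟩ := exists_chart_of_fderiv_ne_zero hV hp hl hdl
  set c : ℝ → E := fun t => φ p + (t - l p) • Y with hc
  set h : E × ℝ → E := fun z => c (l z.1) + z.2 • (φ z.1 - c (l z.1)) with hh
  have hcsm : ContDiff ℝ (⊤ : ℕ∞) c := by fun_prop
  have hℓc (t : ℝ) : ℓ (c t) = t := by simp [hc, hℓφ, hY]
  have hfst : MapsTo Prod.fst (φ.source ×ˢ (univ : Set ℝ)) φ.source := fun z hz => hz.1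
  have hclsm : ContDiffOn ℝ (⊤ : ℕ∞) (fun z : E × ℝ => c (l z.1)) (φ.source ×ˢ univ) :=
    hcsm.comp_contDiffOn ((hl.mono hφV).comp contDiffOn_fst hfst)
  have hhsm : ContDiffOn ℝ (⊤ : ℕ∞) h (φ.source ×ˢ univ) :=
    hclsm.add (contDiffOn_snd.smul ((hφ.comp contDiffOn_fst hfst).sub hclsm))
  obtain ⟨W, T, hW, hT, hpW, hT01, hWT⟩ := generalized_tube_lemma (isCompact_singleton (x := p))
    (isCompact_Icc (a := (0 : ℝ)) (b := 1)) (hhsm.continuousOn.isOpen_inter_preimage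
      (φ.open_source.prod isOpen_univ) φ.open_target) (by
        rintro ⟨x, s⟩ ⟨rfl, -⟩
        exact ⟨⟨hpφ, trivial⟩, by simpa [hh, hc] using φ.map_source hpφ⟩)
  have hsource {x : E} (hx : x ∈ W) : x ∈ φ.source :=
    (hWT (mk_mem_prod hx (hT01 (left_mem_Icc.2 zero_le_one)))).1.1
  have hγ : ContDiffOn ℝ (⊤ : ℕ∞) (fun z => φ.symm (h z)) (W ×ˢ T) :=
    hφsymm.comp (hhsm.mono fun z hz => (hWT hz).1) fun z hz => (hWT hz).2
  refine ⟨W, T, fun z => φ.symm (h z), hpW rfl, hW, hT, hT01, hγ,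
    fun z hz => hφV (φ.map_target (hWT hz).2), fun z hz => ?_, fun x hx => ?_, fun x hx u hu => ?_⟩
  · rw [← hℓφ, φ.right_inv (hWT hz).2]
    simp [hh, hℓφ, hℓc]
  · simpa [hh] using φ.left_inv (hsource hx)
  · have hx₀ : (x, (0 : ℝ)) ∈ W ×ˢ T := ⟨hx, hT01 (left_mem_Icc.2 zero_le_one)⟩
    have hcx : c (l x) ∈ φ.target := by simpa [hh] using (hWT hx₀).2
    refine fderiv_apply_inl_eq_zero_of_factor (κ := fun t => φ.symm (c t)) (l := l)
      (differentiableAt_of_contDiffOn (hW.prod hT) hγ hx₀) ?_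
      (differentiableAt_of_contDiffOn hV hl (hφV (hsource hx)))
      (fun y => by simp [hh]) hu
    exact (differentiableAt_of_contDiffOn φ.open_target hφsymm hcx).comp _
      (hcsm.differentiable (by simp) _)

end LevelSets

section Potential

/- `d (dl ∧ β) = - dl ∧ dβ`. -/
theorem extDeriv2_of_eq_fderiv_wedge {σ : E → E →L[ℝ] E →L[ℝ] ℝ} {l : E → ℝ} {β : E → E →L[ℝ] ℝ}
    {x : E} (hl : ContDiffAt ℝ 2 l x) (hβ : DifferentiableAt ℝ β x)
    (hσ : ∀ᶠ y in nhds x, ∀ u v, σ y u v = fderiv ℝ l y u * β y v - fderiv ℝ l y v * β y u)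
    (u v w : E) : extDeriv2 σ x u v w =
      -wedge12 (fderiv ℝ l x) (fderiv ℝ β x - (fderiv ℝ β x).flip) u v w := by
  have hl' : HasFDerivAt (fderiv ℝ l) (fderiv ℝ (fderiv ℝ l) x) x :=
    ((hl.fderiv_right (m := 1) (by norm_num)).differentiableAt one_ne_zero).hasFDerivAt
  have happly {α : E → E →L[ℝ] ℝ} {α' : E →L[ℝ] E →L[ℝ] ℝ} (hα : HasFDerivAt α α' x) (a : E) :
      HasFDerivAt (fun y => α y a) (α'.flip a) x :=
    (hα.clm_apply (hasFDerivAt_const a x)).congr_fderiv (by ext; simp)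
  have hsymm : IsSymmSndFDerivAt ℝ l x :=
    hl.isSymmSndFDerivAt (by rw [minSmoothness_of_isRCLikeNormedField])
  have hderiv (a b c : E) : fderiv ℝ (fun y => σ y b c) x a =
      fderiv ℝ l x b * fderiv ℝ β x a c + fderiv ℝ (fderiv ℝ l) x a b * β x c
        - (fderiv ℝ l x c * fderiv ℝ β x a b + fderiv ℝ (fderiv ℝ l) x a c * β x b) := by
    rw [Filter.EventuallyEq.fderiv_eq (hσ.mono fun y hy => hy b c),
      (((happly hl' b).fun_mul (happly hβ.hasFDerivAt c)).fun_sub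
        ((happly hl' c).fun_mul (happly hβ.hasFDerivAt b))).fderiv]
    simp [mul_comm]
  simp only [extDeriv2, wedge12, hderiv, sub_apply, ContinuousLinearMap.flip_apply, hsymm.eq v u,
    hsymm.eq w u, hsymm.eq w v]
  ring

theorem mul_apply_comm_of_ker_le {K V : Type*} [Field K] [AddCommGroup V] [Module K V]
    {f g : V →ₗ[K] K} (hfg : LinearMap.ker f ≤ LinearMap.ker g) (u v : V) :
    f u * g v = f v * g u := by
  have h : f u • v - f v • u ∈ LinearMap.ker g := hfg (by simp [mul_comm])
  simpa [sub_eq_zero] using h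

theorem exists_potential_on_levels [CompleteSpace E] {V : Set E} (hV : IsOpen V) {p : E}
    (hp : p ∈ V) {l : E → ℝ} (hl : ContDiffOn ℝ (⊤ : ℕ∞) l V) (hdl : fderiv ℝ l p ≠ 0)
    {β : E → E →L[ℝ] ℝ} (hβ : ContDiffOn ℝ (⊤ : ℕ∞) β V)
    (hcl : ∀ x ∈ V, ∀ u v, fderiv ℝ l x u = 0 → fderiv ℝ l x v = 0 →
      fderiv ℝ β x u v = fderiv ℝ β x v u) :
    ∃ W ⊆ V, IsOpen W ∧ p ∈ W ∧ ∃ μ : E → ℝ, ContDiffOn ℝ (⊤ : ℕ∞) μ W ∧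
      ∀ x ∈ W, ∀ u, fderiv ℝ l x u = 0 → fderiv ℝ μ x u = β x u := by
  obtain ⟨W, T, γ, hpW, hγ⟩ := exists_isLevelContraction hV hp hl hdl
  exact ⟨W, hγ.subset, hγ.isOpen, hpW, hγ.exists_potential hV
    (fun _ => differentiableAt_of_contDiffOn hV hl) hβ hcl⟩

/- If `dl(Y) ≠ 0` then `σ = dl ∧ β` for `β = σ(Y, ·) / dl(Y)`, and `dσ = 0` makes `β` closed on the
level sets of `l`. -/
theorem exists_eq_fderiv_wedge_fderiv [CompleteSpace E] {V : Set E} (hV : IsOpen V) {p : E}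
    (hp : p ∈ V) {l : E → ℝ} (hl : ContDiffOn ℝ (⊤ : ℕ∞) l V) (hdl : fderiv ℝ l p ≠ 0)
    {σ : E → E →L[ℝ] E →L[ℝ] ℝ} (hσ : ContDiffOn ℝ (⊤ : ℕ∞) σ V) (hcl : IsClosed2On σ V)
    (hwedge : ∀ x ∈ V, ∀ u v w, wedge12 (fderiv ℝ l x) (σ x) u v w = 0) :
    ∃ W ⊆ V, IsOpen W ∧ p ∈ W ∧ ∃ μ : E → ℝ, ContDiffOn ℝ (⊤ : ℕ∞) μ W ∧
      ∀ x ∈ W, ∀ u v, σ x u v =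
        fderiv ℝ l x u * fderiv ℝ μ x v - fderiv ℝ l x v * fderiv ℝ μ x u := by
  obtain ⟨Y, hY⟩ := DFunLike.ne_iff.1 hdl
  have hdlsm : ContDiffOn ℝ (⊤ : ℕ∞) (fun x => fderiv ℝ l x Y) V :=
    (hl.fderiv_of_isOpen hV (by simp)).clm_apply contDiffOn_const
  set V' := V ∩ (fun x => fderiv ℝ l x Y) ⁻¹' {0}ᶜ
  have hV' : IsOpen V' := hdlsm.continuousOn.isOpen_inter_preimage hV isOpen_compl_singleton
  set β : E → E →L[ℝ] ℝ := fun x => (fderiv ℝ l x Y)⁻¹ • σ x Y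
  have hβ : ContDiffOn ℝ (⊤ : ℕ∞) β V' :=
    ((hdlsm.mono inter_subset_left).inv fun x hx => hx.2).smul
      ((hσ.mono inter_subset_left).clm_apply contDiffOn_const)
  have hσβ (x : E) (hx : x ∈ V') (u v : E) :
      σ x u v = fderiv ℝ l x u * β x v - fderiv ℝ l x v * β x u := by
    have hx₀ : fderiv ℝ l x Y ≠ 0 := hx.2
    have h := hwedge x hx.1 Y u v
    simp only [wedge12] at h
    simp only [β, smul_apply, smul_eq_mul]
    field_simp
    linear_combination h
  have hβcl (x : E) (hx : x ∈ V') (u v : E) (hu : fderiv ℝ l x u = 0) (hv : fderiv ℝ l x v = 0) :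
      fderiv ℝ β x u v = fderiv ℝ β x v u := by
    have h := extDeriv2_of_eq_fderiv_wedge
      ((hl.contDiffAt (hV.mem_nhds hx.1)).of_le (WithTop.coe_le_coe.2 le_top))
      (differentiableAt_of_contDiffOn hV' hβ hx)
      (Filter.mem_of_superset (hV'.mem_nhds hx) hσβ) Y u v
    rw [hcl x hx.1, wedge12, hu, hv] at h
    simpa [sub_eq_zero, show fderiv ℝ l x Y ≠ 0 from hx.2] using h
  obtain ⟨W, hWV', hW, hpW, μ, hμ, hμβ⟩ := exists_potential_on_levels hV' ⟨hp, hY⟩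
    (hl.mono inter_subset_left) hdl hβ hβcl
  refine ⟨W, hWV'.trans inter_subset_left, hW, hpW, μ, hμ, fun x hx u v => ?_⟩
  have h := mul_apply_comm_of_ker_le (f := (fderiv ℝ l x : E →ₗ[ℝ] ℝ))
    (g := (fderiv ℝ μ x - β x : E →L[ℝ] ℝ)) (fun u hu => by simp [hμβ x hx u hu]) u v
  simp only [ContinuousLinearMap.coe_coe, sub_apply] at h
  rw [hσβ x (hWV' hx)]
  linear_combination -h

end Potential

section RegularPair

variable {V ι : Type*} [NormedAddCommGroup V] [NormedSpace ℝ V] [Fintype ι]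

/-- The tangential data at a regular point of an `ωN` manifold: a symplectic form `ω` and a
compatible operator `A` on a space of dimension `2n`, with `n` distinct eigenvalues `l i`. -/
structure IsRegularPair (ω : V →L[ℝ] V →L[ℝ] ℝ) (A : V →L[ℝ] V) (l : ι → ℝ) : Prop where
  self_eq_zero : ∀ v, ω v v = 0
  eq_zero_of_forall : ∀ v, (∀ w, ω v w = 0) → v = 0
  apply_comm : ∀ u v, ω (A u) v = ω u (A v)
  exists_eigenvector : ∀ i, ∃ v, v ≠ 0 ∧ A v = l i • v
  injective : Function.Injective l
  finrank_eq : finrank ℝ V = 2 * Fintype.card ι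

/-- For a regular pair, the restriction of `ω` to the `l i`-eigenspace of `A`, extended by zero on
the other eigenspaces. -/
def spectralPart [DecidableEq ι] (ω : V →L[ℝ] V →L[ℝ] ℝ) (A : V →L[ℝ] V) (l : ι → ℝ) (i : ι) :
    V →L[ℝ] V →L[ℝ] ℝ :=
  ω.comp (spectralProj A l i)

namespace IsRegularPair

variable {ω : V →L[ℝ] V →L[ℝ] ℝ} {A : V →L[ℝ] V} {l : ι → ℝ}

theorem isAlt (h : IsRegularPair ω A l) : ω.toBilinForm.IsAlt := h.self_eq_zero

theorem nondegenerate (h : IsRegularPair ω A l) : ω.toBilinForm.Nondegenerate :=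
  (LinearMap.IsRefl.nondegenerate_iff_separatingLeft h.isAlt.isRefl).2 h.eq_zero_of_forall

theorem isSelfAdjoint (h : IsRegularPair ω A l) :
    ω.toBilinForm.IsSelfAdjoint (A : End ℝ V) := h.apply_comm

theorem hasEigenvalue (h : IsRegularPair ω A l) (i : ι) : End.HasEigenvalue (A : End ℝ V) (l i) :=
  have ⟨_, hv, hAv⟩ := h.exists_eigenvector i
  Module.End.hasEigenvalue_of_hasEigenvector ⟨Module.End.mem_eigenspace_iff.2 hAv, hv⟩

theorem linearIndependent_sumElim [FiniteDimensional ℝ V] (h : IsRegularPair ω A l)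
    {α β : ι → V →L[ℝ] ℝ} (hω : ∀ u v, ω u v = ∑ i, (α i u * β i v - α i v * β i u)) :
    LinearIndependent ℝ (Sum.elim α β) := by
  refine LinearIndependent.of_comp (ContinuousLinearMap.coeLM ℝ) ?_
  refine linearIndependent_of_separating (by simp [h.finrank_eq, two_mul]) fun u hu => ?_
  have hα (i : ι) : α i u = 0 := hu (Sum.inl i)
  have hβ (i : ι) : β i u = 0 := hu (Sum.inr i)
  exact h.eq_zero_of_forall u fun v => by simp [hω, hα, hβ]

variable [FiniteDimensional ℝ V]

theorem iSup_eigenspace_eq_top (h : IsRegularPair ω A l) :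
    ⨆ i, End.eigenspace (A : End ℝ V) (l i) = ⊤ :=
  iSup_eigenspace_eq_top_of_finrank_eq h.isAlt h.nondegenerate h.isSelfAdjoint h.injective
    h.hasEigenvalue h.finrank_eq

variable [DecidableEq ι]

theorem comp_pow_eq_sum (h : IsRegularPair ω A l) (k : ℕ) :
    ω.comp (A ^ k) = ∑ i, l i ^ k • spectralPart ω A l i := by
  have hpow (i : ι) : A ^ k * spectralProj A l i = l i ^ k • spectralProj A l i := by
    induction k with
    | zero => simp
    | succ k ih =>
      rw [pow_succ, mul_assoc, mul_spectralProj h.injective h.iSup_eigenspace_eq_top,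
        mul_smul_comm, ih, smul_smul, ← pow_succ']
  calc ω.comp (A ^ k) = ω.comp (A ^ k * ∑ i, spectralProj A l i) := by
        rw [sum_spectralProj h.injective h.iSup_eigenspace_eq_top, mul_one]
    _ = ∑ i, l i ^ k • spectralPart ω A l i := by
        simp only [Finset.mul_sum, hpow, spectralPart]
        ext u v
        simp

theorem spectralPart_map_apply (h : IsRegularPair ω A l) (i : ι) (u v : V) :
    spectralPart ω A l i (A u) v = l i * spectralPart ω A l i u v := by
  have hP := spectralProj_mul h.injective h.iSup_eigenspace_eq_top i
  simp only [spectralPart, ContinuousLinearMap.comp_apply]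
  rw [← mul_apply_eq_comp, hP, smul_apply, map_smul, smul_apply, smul_eq_mul]

theorem spectralPart_apply (h : IsRegularPair ω A l) (i : ι) (u v : V) :
    spectralPart ω A l i u v = ω (spectralProj A l i u) (spectralProj A l i v) := by
  have hself : ω.toBilinForm.IsSelfAdjoint (spectralProj A l i : End ℝ V) :=
    coe_spectralProj A l i ▸ isSelfAdjoint_aeval h.isSelfAdjoint _
  have hP := isIdempotentElem_spectralProj h.injective h.iSup_eigenspace_eq_top i
  calc ω (spectralProj A l i u) v
      = ω (spectralProj A l i (spectralProj A l i u)) v := by rw [← mul_apply_eq_comp, hP.eq]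
    _ = ω (spectralProj A l i u) (spectralProj A l i v) := hself _ _

theorem wedge12_spectralPart_eq_zero (h : IsRegularPair ω A l) {i : ι} {α : V →L[ℝ] ℝ}
    (hα : ∀ v, α (A v) = l i * α v) (u v w : V) : wedge12 α (spectralPart ω A l i) u v w = 0 := by
  have hmem (v : V) : spectralProj A l i v ∈ End.eigenspace (A : End ℝ V) (l i) :=
    Module.End.mem_eigenspace_iff.2 <|
      DFunLike.congr_fun (mul_spectralProj h.injective h.iSup_eigenspace_eq_top i) v
  rw [← comp_spectralProj_eq_self h.injective h.iSup_eigenspace_eq_top hα]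
  simp only [wedge12, h.spectralPart_apply]
  exact wedge_eq_zero_of_finrank_eq_two h.isAlt (finrank_eigenspace_eq_two h.isAlt h.nondegenerate
    h.isSelfAdjoint h.injective h.hasEigenvalue h.finrank_eq i) (α : V →ₗ[ℝ] ℝ)
    (hmem u) (hmem v) (hmem w)

theorem apply_eq_sum_of_spectralPart_eq_wedge (h : IsRegularPair ω A l) {α β : ι → V →L[ℝ] ℝ}
    (hαβ : ∀ i u v, spectralPart ω A l i u v = α i u * β i v - α i v * β i u) (u v : V) :
    ω u v = ∑ i, (α i u * β i v - α i v * β i u) := by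
  simpa [hαβ] using congrArg (fun τ => τ u v) (h.comp_pow_eq_sum 0)

theorem apply_map_eq_of_spectralPart_eq_wedge (h : IsRegularPair ω A l) {i : ι}
    {α β : V →L[ℝ] ℝ} (hα₀ : α ≠ 0) (hα : ∀ v, α (A v) = l i * α v)
    (hαβ : ∀ u v, spectralPart ω A l i u v = α u * β v - α v * β u) (u : V) :
    β (A u) = l i * β u := by
  obtain ⟨v, hv⟩ := DFunLike.ne_iff.1 hα₀
  have hσ := h.spectralPart_map_apply i u v
  rw [hαβ, hαβ, hα] at hσ
  exact mul_left_cancel₀ hv (by linear_combination -hσ)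

end IsRegularPair

end RegularPair

section RegularOmegaN

open Topology

/-- An `ωN` structure on the open set `U`, regular in the sense that `N` has `n` distinct smooth
eigenvalues `lam i` on `U`; the differentials of the `lam i` may be dependent. -/
structure IsRegularOmegaN {n : ℕ} (ω : E → E →L[ℝ] E →L[ℝ] ℝ) (N : E → E →L[ℝ] E)
    (lam : Fin n → E → ℝ) (U : Set E) : Prop where
  isOpen : IsOpen U
  contDiffOn_form : ContDiffOn ℝ (⊤ : ℕ∞) ω U
  contDiffOn_operator : ContDiffOn ℝ (⊤ : ℕ∞) N U
  contDiffOn_eigenvalue : ∀ i, ContDiffOn ℝ (⊤ : ℕ∞) (lam i) U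
  isClosed2On : IsClosed2On ω U
  isClosed2On_comp : IsClosed2On (fun y => (ω y).comp (N y)) U
  nijTorsion_eq_zero : ∀ x ∈ U, ∀ u v, nijTorsion N x u v = 0
  isRegularPair : ∀ x ∈ U, IsRegularPair (ω x) (N x) (fun i => lam i x)

theorem isOpen_inter_setOf_injective {X Y ι : Type*} [TopologicalSpace X] [TopologicalSpace Y]
    [T2Space Y] [Finite ι] {U : Set X} (hU : IsOpen U) {f : ι → X → Y}
    (hf : ∀ i, ContinuousOn (f i) U) : IsOpen (U ∩ {x | Function.Injective fun i => f i x}) := by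
  rw [isOpen_iff_mem_nhds]
  rintro x ⟨hx, hinj⟩
  refine Filter.inter_mem (hU.mem_nhds hx) ?_
  have hcont (i : ι) : ContinuousAt (f i) x := (hf i).continuousAt (hU.mem_nhds hx)
  have hne (i j : ι) : ∀ᶠ y in 𝓝 x, i ≠ j → f i y ≠ f j y :=
    Filter.eventually_imp_distrib_left.2 fun hij =>
      ((hcont i).ne_iff_eventually_ne (hcont j)).1 (hinj.ne hij)
  filter_upwards [Filter.eventually_all.2 fun i => Filter.eventually_all.2 (hne i)] with y hy i j
  exact not_imp_not.1 (hy i j)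

namespace IsRegularOmegaN

variable {n : ℕ} {ω : E → E →L[ℝ] E →L[ℝ] ℝ} {N : E → E →L[ℝ] E}
  {lam : Fin n → E → ℝ} {U : Set E} {x : E}

theorem contDiffOn_proj (h : IsRegularOmegaN ω N lam U) (i : Fin n) :
    ContDiffOn ℝ (⊤ : ℕ∞) (fun x => spectralProj (N x) (fun j => lam j x) i) U :=
  contDiffOn_spectralProj h.contDiffOn_operator h.contDiffOn_eigenvalue
    (fun x hx => (h.isRegularPair x hx).injective) i

theorem contDiffOn_spectralPart (h : IsRegularOmegaN ω N lam U) (i : Fin n) :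
    ContDiffOn ℝ (⊤ : ℕ∞) (fun x => spectralPart (ω x) (N x) (fun j => lam j x) i) U :=
  h.contDiffOn_form.clm_comp (h.contDiffOn_proj i)

variable [FiniteDimensional ℝ E]

theorem fderiv_eigenvalue_map (h : IsRegularOmegaN ω N lam U) (hx : x ∈ U) (i : Fin n) (v : E) :
    fderiv ℝ (lam i) x (N x v) = lam i x * fderiv ℝ (lam i) x v := by
  have hpair := h.isRegularPair x hx
  obtain ⟨e, he₀, he⟩ := hpair.exists_eigenvector i
  set P : E → E →L[ℝ] E := fun y => spectralProj (N y) (fun j => lam j y) i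
  have hPe : P x e = e := by simp [P, spectralProj_apply_of_mem_eigenspace hpair.injective he]
  have heig : ∀ᶠ y in 𝓝 x, N y (P y e) = lam i y • P y e :=
    Filter.mem_of_superset (h.isOpen.mem_nhds hx) fun y hy => DFunLike.congr_fun
      (mul_spectralProj (h.isRegularPair y hy).injective
        (h.isRegularPair y hy).iSup_eigenspace_eq_top i) e
  have hleft (u : E) : P x (N x u) = lam i x • P x u :=
    DFunLike.congr_fun (spectralProj_mul hpair.injective hpair.iSup_eigenspace_eq_top i) u
  exact fderiv_eigenvalue_apply (differentiableAt_of_contDiffOn h.isOpen h.contDiffOn_operator hx)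
    ((differentiableAt_of_contDiffOn h.isOpen (h.contDiffOn_proj i) hx).clm_apply
      (differentiableAt_const e))
    (differentiableAt_of_contDiffOn h.isOpen (h.contDiffOn_eigenvalue i) hx) heig hleft
    (by rwa [hPe, hPe])
    (fun u => h.nijTorsion_eq_zero x hx u _) v

theorem wedge12_spectralPart_eq_zero (h : IsRegularOmegaN ω N lam U) (hx : x ∈ U) (i : Fin n)
    (u v w : E) : wedge12 (fderiv ℝ (lam i) x)
      (spectralPart (ω x) (N x) (fun j => lam j x) i) u v w = 0 :=
  (h.isRegularPair x hx).wedge12_spectralPart_eq_zero (h.fderiv_eigenvalue_map hx i) u v w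

theorem isClosed2On_spectralPart (h : IsRegularOmegaN ω N lam U) (i : Fin n) :
    IsClosed2On (fun x => spectralPart (ω x) (N x) (fun j => lam j x) i) U := by
  intro x hx u v w
  have hclpow (k : ℕ) := isClosed2On_comp_pow
    (fun y hy => differentiableAt_of_contDiffOn h.isOpen h.contDiffOn_form hy)
    (fun y hy => differentiableAt_of_contDiffOn h.isOpen h.contDiffOn_operator hy)
    (fun y hy => (h.isRegularPair y hy).apply_comm) h.nijTorsion_eq_zero h.isClosed2On
    h.isClosed2On_comp k x hx u v w
  refine extDeriv2_eq_zero_of_sum_pow_smul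
    (σ := fun i y => spectralPart (ω y) (N y) (fun j => lam j y) i)
    (fun j => differentiableAt_of_contDiffOn h.isOpen (h.contDiffOn_eigenvalue j) hx)
    (fun j => differentiableAt_of_contDiffOn h.isOpen (h.contDiffOn_spectralPart j) hx)
    (h.isRegularPair x hx).injective (fun j => h.wedge12_spectralPart_eq_zero hx j u v w)
    (fun k => ?_) i
  rw [← hclpow k]
  exact congrFun₃ (extDeriv2_congr (Filter.mem_of_superset (h.isOpen.mem_nhds hx)
    fun y hy => ((h.isRegularPair y hy).comp_pow_eq_sum k).symm)) u v w

theorem exists_spectralPart_eq_wedge (h : IsRegularOmegaN ω N lam U) {p : E} (hp : p ∈ U)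
    (hdlam : ∀ i, fderiv ℝ (lam i) p ≠ 0) :
    ∃ V ⊆ U, IsOpen V ∧ p ∈ V ∧ ∃ mu : Fin n → E → ℝ,
      (∀ i, ContDiffOn ℝ (⊤ : ℕ∞) (mu i) V) ∧
      ∀ i, ∀ x ∈ V, ∀ u v, spectralPart (ω x) (N x) (fun j => lam j x) i u v =
        fderiv ℝ (lam i) x u * fderiv ℝ (mu i) x v -
          fderiv ℝ (lam i) x v * fderiv ℝ (mu i) x u := by
  have : CompleteSpace E := FiniteDimensional.complete ℝ E
  choose W _ hW hpW mu hmu hσ using fun i => exists_eq_fderiv_wedge_fderiv h.isOpen hp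
    (h.contDiffOn_eigenvalue i) (hdlam i) (h.contDiffOn_spectralPart i)
    (h.isClosed2On_spectralPart i) fun x hx => h.wedge12_spectralPart_eq_zero hx i
  refine ⟨U ∩ ⋂ i, W i, inter_subset_left, h.isOpen.inter (isOpen_iInter_of_finite hW),
    ⟨hp, mem_iInter.2 hpW⟩, mu, fun i => (hmu i).mono ?_, fun i x hx => hσ i x ?_⟩
  · exact inter_subset_right.trans (iInter_subset W i)
  · exact mem_iInter.1 hx.2 i

end IsRegularOmegaN

end RegularOmegaN

/-- Let `(M, ω₁, N)` be an `ωN` manifold of dimension `2n`.  Then each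
regular point `p` (where the eigenvalue functions `λ₁, …, λ_n` of `N` are pairwise
distinct and their differentials are linearly independent) has an open neighborhood `V`
admitting coordinates `(λ₁, …, λ_n, μ₁, …, μ_n)` — i.e. `2n` smooth functions whose
differentials are linearly independent at each point of `V` — such that
(1) `ω₁ = ∑ i, dλ_i ∧ dμ_i`, and (2) `N* dλ_i = λ_i dλ_i` and `N* dμ_i = λ_i dμ_i`. -/
theorem darboux_nijenhuis_coordinates
    {E : Type*} [NormedAddCommGroup E] [NormedSpace ℝ E] [FiniteDimensional ℝ E]
    {n : ℕ} (hdim : finrank ℝ E = 2 * n)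
    (U : Set E) (hU : IsOpen U)
    (ω : E → E →L[ℝ] E →L[ℝ] ℝ) (hωsm : ContDiffOn ℝ (⊤ : ℕ∞) ω U)
    (hskew : IsSkewOn ω U) (hnd : IsNondegOn ω U) (hcl : IsClosed2On ω U)
    (N : E → E →L[ℝ] E) (hNsm : ContDiffOn ℝ (⊤ : ℕ∞) N U)
    (hNij : ∀ x ∈ U, ∀ u v : E, nijTorsion N x u v = 0)
    (hcompat : ∀ x ∈ U, ∀ u v : E, ω x (N x u) v = ω x u (N x v))
    (hΩcl : IsClosed2On (fun y => (ω y).comp (N y)) U)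
    (lam : Fin n → E → ℝ) (hlamsm : ∀ i, ContDiffOn ℝ (⊤ : ℕ∞) (lam i) U)
    (heig : ∀ i, ∀ x ∈ U, ∃ v : E, v ≠ 0 ∧ N x v = lam i x • v)
    (p : E) (hp : p ∈ U)
    (hdist : ∀ i j, i ≠ j → lam i p ≠ lam j p)
    (hindep : LinearIndependent ℝ (fun i => fderiv ℝ (lam i) p)) :
    ∃ V : Set E, IsOpen V ∧ p ∈ V ∧ V ⊆ U ∧
      ∃ mu : Fin n → E → ℝ,
        (∀ i, ContDiffOn ℝ (⊤ : ℕ∞) (mu i) V) ∧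
        (∀ x ∈ V, LinearIndependent ℝ
          (Sum.elim (fun i => fderiv ℝ (lam i) x) (fun i => fderiv ℝ (mu i) x))) ∧
        (∀ x ∈ V, ∀ u v : E, ω x u v =
          ∑ i, (fderiv ℝ (lam i) x u * fderiv ℝ (mu i) x v
            - fderiv ℝ (lam i) x v * fderiv ℝ (mu i) x u)) ∧
        (∀ x ∈ V, ∀ i, ∀ v : E,
          fderiv ℝ (lam i) x (N x v) = lam i x * fderiv ℝ (lam i) x v ∧
          fderiv ℝ (mu i) x (N x v) = lam i x * fderiv ℝ (mu i) x v) := by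
  set U' := U ∩ {x | Function.Injective fun i => lam i x}
  have hU' : U' ⊆ U := inter_subset_left
  have h : IsRegularOmegaN ω N lam U' :=
    { isOpen := isOpen_inter_setOf_injective hU fun i => (hlamsm i).continuousOn
      contDiffOn_form := hωsm.mono hU'
      contDiffOn_operator := hNsm.mono hU'
      contDiffOn_eigenvalue := fun i => (hlamsm i).mono hU'
      isClosed2On := fun x hx => hcl x (hU' hx)
      isClosed2On_comp := fun x hx => hΩcl x (hU' hx)
      nijTorsion_eq_zero := fun x hx => hNij x (hU' hx)
      isRegularPair := fun x hx => ⟨hskew x hx.1, hnd x hx.1, hcompat x hx.1,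
        fun i => heig i x hx.1, hx.2, by simpa using hdim⟩ }
  obtain ⟨V, hVU', hV, hpV, mu, hmu, hσ⟩ := h.exists_spectralPart_eq_wedge
    ⟨hp, fun i j => not_imp_not.1 (hdist i j)⟩ hindep.ne_zero
  have hpair (x : E) (hx : x ∈ V) := h.isRegularPair x (hVU' hx)
  have hsum (x : E) (hx : x ∈ V) :=
    (hpair x hx).apply_eq_sum_of_spectralPart_eq_wedge fun i => hσ i x hx
  have hli (x : E) (hx : x ∈ V) := (hpair x hx).linearIndependent_sumElim (hsum x hx)
  refine ⟨V, hV, hpV, hVU'.trans hU', mu, hmu, hli, hsum, fun x hx i v => ?_⟩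
  have hlam := h.fderiv_eigenvalue_map (hVU' hx) i
  exact ⟨hlam v, (hpair x hx).apply_map_eq_of_spectralPart_eq_wedge
    ((hli x hx).ne_zero (Sum.inl i)) hlam (hσ i x hx) v⟩
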